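/- The infinite series ∑_{n=1}^{∞} 1/(n(4n−1)) converges to (6·ln 2 − π)/2. -/

import Mathlib

/-!
Since `1/(n(4n-1)) = 4/(4n-1) - 1/n`, and the terms `1/(4n-1)` are half the difference between
the odd reciprocals `1/(4n-3) + 1/(4n-1)` and the paired Leibniz terms `1/(4n-3) - 1/(4n-1)`,
the `N`-th partial sum equals `2 H_{4N} - H_{2N} - H_N - 2 L_{2N}`, where `H` denotes the harmonic
numbers and `L` the partial sums of Leibniz's series for `π/4` (`partial_sum_eq`).
Because `H_m - log m → γ`, the Euler constants cancel and the logarithms combine to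
`2 log (4N) - log (2N) - log N = 3 log 2`, so the limit is `3 log 2 - π/2`.
-/

open Real

open Filter Topology

lemma partial_sum_eq (N : ℕ) :
    ∑ n ∈ Finset.range N, 1 / (((n:ℝ)+1) * (4*((n:ℝ)+1)-1)) =
      2 * (harmonic (4 * N) : ℝ) - harmonic (2 * N) - harmonic N
        - 2 * ∑ k ∈ Finset.range (2 * N), (-1 : ℝ) ^ k / (2 * k + 1) := by
  induction N with
  | zero => simp
  | succ N ih =>
    rw [Finset.sum_range_succ, ih, show 4 * (N + 1) = 4 * N + 1 + 1 + 1 + 1 by ring,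
      show 2 * (N + 1) = 2 * N + 1 + 1 by ring, Finset.sum_range_succ _ (2 * N + 1),
      Finset.sum_range_succ _ (2 * N)]
    simp only [harmonic_succ, pow_succ, pow_mul]
    push_cast
    have h0 : (0:ℝ) ≤ N := N.cast_nonneg
    have h1 : 4 * ((N:ℝ) + 1) - 1 = 4 * N + 3 := by ring
    have e1 : 4 * (N:ℝ) + 3 + 1 = 4 * (N + 1) := by ring
    have e2 : 2 * (N:ℝ) + 1 + 1 = 2 * (N + 1) := by ring
    have e3 : 4 * (N:ℝ) + 2 + 1 = 4 * N + 3 := by ring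
    have e4 : 4 * (N:ℝ) + 1 + 1 = 2 * (2 * N + 1) := by ring
    have e5 : 2 * (2 * (N:ℝ) + 1) + 1 = 4 * N + 3 := by ring
    have e6 : 2 * (2 * (N:ℝ)) + 1 = 4 * N + 1 := by ring
    rw [h1, e1, e2, e3, e4, e5, e6]
    norm_num
    have p1 : (N:ℝ) + 1 ≠ 0 := by positivity
    have p2 : 4 * (N:ℝ) + 3 ≠ 0 := by positivity
    have p3 : 4 * (N:ℝ) + 1 ≠ 0 := by positivity
    have p4 : 2 * (N:ℝ) + 1 ≠ 0 := by positivity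
    field_simp
    ring

theorem stmt_7 :
    HasSum (fun n : ℕ => 1 / (((n:ℝ)+1) * (4*((n:ℝ)+1)-1))) ((6 * Real.log 2 - π) / 2) := by
  have hnn : ∀ n : ℕ, 0 ≤ 1 / (((n:ℝ)+1) * (4*((n:ℝ)+1)-1)) := by
    intro n
    have h0 : (0:ℝ) ≤ n := n.cast_nonneg
    have h1 : 0 ≤ 4 * ((n:ℝ) + 1) - 1 := by linarith
    positivity
  rw [hasSum_iff_tendsto_nat_of_nonneg hnn]
  have t2 : Tendsto (fun N : ℕ => 2 * N) atTop atTop :=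
    tendsto_id.const_mul_atTop' (by norm_num)
  have t4 : Tendsto (fun N : ℕ => 4 * N) atTop atTop :=
    tendsto_id.const_mul_atTop' (by norm_num)
  have hγ := Real.tendsto_harmonic_sub_log
  have key := ((((hγ.comp t4).const_mul 2).sub (hγ.comp t2)).sub hγ).sub
    ((Real.tendsto_sum_pi_div_four.comp t2).const_mul 2)
  have key' := key.add_const (3 * Real.log 2)
  have hlim : 2 * Real.eulerMascheroniConstant - Real.eulerMascheroniConstant
      - Real.eulerMascheroniConstant - 2 * (π / 4) + 3 * Real.log 2
      = (6 * Real.log 2 - π) / 2 := by ring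
  rw [hlim] at key'
  refine key'.congr' ?_
  -- For `N = 0` the junk value `log 0 = 0` breaks the cancellation of the logarithms.
  filter_upwards [eventually_gt_atTop 0] with N hN
  have hN' : (N:ℝ) ≠ 0 := by positivity
  rw [partial_sum_eq]
  simp only [Function.comp_apply]
  push_cast
  rw [Real.log_mul (by norm_num) hN', Real.log_mul (by norm_num) hN',
    show (4:ℝ) = 2 ^ 2 by norm_num, Real.log_pow]
  push_cast
  ring
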